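/- Let g = gl(m|n), u = ⊕_{1≤i≤m, m+1≤j≤m+n} ℂE_{ij}, V = ℂ^{m|n}, fix 1 ≤ m_1 < m, and take the mixing set D = ⊕_{m_1+1≤i≤m, m+1≤j≤m+n} ℂx_{ij}. The cochain space is C ⊗ V where C = ℂ[x_{ij}, x̄_{kj} : 1≤i≤m_1 < k≤m, m+1≤j≤m+n] with x̄_{kj} = ∂_{x_{kj}}, and δ acts by δ(Σ_i f_i v_i) = Σ_{i=1}^{m_1} (Σ_j x_{ij} f_j) v_i − Σ_{i=m_1+1}^m (Σ_j ∂_{x̄_{ij}} f_j) v_i. Then ker δ = C v_1 + ⋯ + C v_m + K_3 where K_3 = {Σ_{j>m} f_j v_j : Σ_j x_{ij} f_j = 0 for all i ≤ m_1 and Σ_j ∂_{x̄_{kj}} f_j = 0 for all m_1 < k ≤ m}; im δ = {Σ_{i=1}^{m_1}(Σ_j x_{ij} f_j)v_i − Σ_{i=m_1+1}^m(Σ_j ∂_{x̄_{ij}} f_j)v_i : f_j ∈ C}; and H^*_D(u,V) = (C v_1 + ⋯ + C v_m)/im δ ⊕ K_3. -/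

import Mathlib

/-!
STATEMENT 13: mixed `u`-cohomology of `gl(m|n)` on the natural module `V = ℂ^{m|n}` for the
mixing set `D = ⊕_{m₁ < i ≤ m, j} ℂ x_{ij}` (with `1 ≤ m₁ < m`).  Writing `m = m₁ + m₂`
(`m₂ = m - m₁ ≥ 1`), the mixed Fock space is
`𝒞 = ℂ[x_{ij} (i ≤ m₁), x̄_{kj} (m₁ < k ≤ m)]`, on which `x_{ij}` acts by multiplication and
`x_{kj}` acts as `-∂/∂x̄_{kj}`; the differential acts by
`δ(Σ_i f_i v_i) = Σ_{i ≤ m₁} (Σ_j x_{ij} f_j) v_i - Σ_{m₁ < k ≤ m} (Σ_j ∂_{x̄_{kj}} f_j) v_k`.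
Variables are indexed by `(Fin m₁ ⊕ Fin m₂) × Fin n` (`inl i ↔ x_{ij}`, `inr k ↔ x̄_{kj}`),
and coordinates of `V` by `(Fin m₁ ⊕ Fin m₂) ⊕ Fin n`.
-/

noncomputable section

open MvPolynomial

/-- `𝒞 = ℂ[x_{ij}, x̄_{kj}]`, the mixed Fock space. -/
abbrev PolyC (m₁ m₂ n : ℕ) : Type := MvPolynomial ((Fin m₁ ⊕ Fin m₂) × Fin n) ℂ

/-- The cochain space `C_D(u,V) = 𝒞 ⊗ V`, as coordinate vectors. -/
abbrev CochainC (m₁ m₂ n : ℕ) : Type := ((Fin m₁ ⊕ Fin m₂) ⊕ Fin n) → PolyC m₁ m₂ n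

variable (m₁ m₂ n : ℕ)

/-- The differential
`δ(Σ f_i v_i) = Σ_{i=1}^{m₁} (Σ_j x_{ij} f_j) v_i - Σ_{i=m₁+1}^{m} (Σ_j ∂_{x̄_{ij}} f_j) v_i`. -/
noncomputable def deltaC : CochainC m₁ m₂ n →ₗ[ℂ] CochainC m₁ m₂ n :=
  LinearMap.pi fun s =>
    Sum.elim
      (Sum.elim
        (fun i => ∑ j : Fin n,
          (LinearMap.mulLeft ℂ (MvPolynomial.X (Sum.inl i, j) : PolyC m₁ m₂ n)).comp
            (LinearMap.proj (Sum.inr j) : CochainC m₁ m₂ n →ₗ[ℂ] PolyC m₁ m₂ n))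
        (fun k => -∑ j : Fin n,
          (MvPolynomial.pderiv (Sum.inr k, j)).toLinearMap.comp
            (LinearMap.proj (Sum.inr j) : CochainC m₁ m₂ n →ₗ[ℂ] PolyC m₁ m₂ n)))
      (fun _ => 0) s

/-- The subspace `𝒞 v_1 + ⋯ + 𝒞 v_m`. -/
def evenPartC : Submodule ℂ (CochainC m₁ m₂ n) where
  carrier := {f | ∀ j : Fin n, f (Sum.inr j) = 0}
  add_mem' := by intro a b ha hb j; simp [ha j, hb j]
  zero_mem' := by intro j; simp
  smul_mem' := by intro c a ha j; simp [ha j]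

/-- `K₃ = {Σ_{j ∈ I₁} f_j v_j : Σ_j x_{ij} f_j = 0 (i ≤ m₁) and Σ_j ∂_{x̄_{kj}} f_j = 0
(m₁ < k ≤ m)}`. -/
def KthreeC : Submodule ℂ (CochainC m₁ m₂ n) where
  carrier := {f | (∀ i : Fin m₁ ⊕ Fin m₂, f (Sum.inl i) = 0) ∧
    (∀ i : Fin m₁, ∑ j : Fin n, MvPolynomial.X (Sum.inl i, j) * f (Sum.inr j) = 0) ∧
    (∀ k : Fin m₂, ∑ j : Fin n, MvPolynomial.pderiv (Sum.inr k, j) (f (Sum.inr j)) = 0)}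
  add_mem' := by
    rintro a b ⟨ha1, ha2, ha3⟩ ⟨hb1, hb2, hb3⟩
    refine ⟨fun i => by simp [ha1 i, hb1 i], fun i => ?_, fun k => ?_⟩
    · simp only [Pi.add_apply, mul_add, Finset.sum_add_distrib, ha2 i, hb2 i, add_zero]
    · simp only [Pi.add_apply, map_add, Finset.sum_add_distrib, ha3 k, hb3 k, add_zero]
  zero_mem' := ⟨fun i => rfl, fun i => by simp, fun k => by simp⟩
  smul_mem' := by
    rintro c a ⟨ha1, ha2, ha3⟩
    refine ⟨fun i => by simp [ha1 i], fun i => ?_, fun k => ?_⟩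
    · have : ∑ j : Fin n, MvPolynomial.X (Sum.inl i, j) * (c • a) (Sum.inr j)
          = c • ∑ j : Fin n, MvPolynomial.X (Sum.inl i, j) * a (Sum.inr j) := by
        rw [Finset.smul_sum]; congr 1; funext j
        simp [MvPolynomial.smul_eq_C_mul]; ring
      rw [this, ha2 i, smul_zero]
    · have : ∑ j : Fin n, MvPolynomial.pderiv (Sum.inr k, j) ((c • a) (Sum.inr j))
          = c • ∑ j : Fin n, MvPolynomial.pderiv (Sum.inr k, j) (a (Sum.inr j)) := by
        rw [Finset.smul_sum]; congr 1; funext j; simp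
      rw [this, ha3 k, smul_zero]

/-- The inclusion `(f_j)_{j ∈ I₁} ↦ Σ_j f_j v_j` of the odd coordinates. -/
noncomputable def oddInclC : (Fin n → PolyC m₁ m₂ n) →ₗ[ℂ] CochainC m₁ m₂ n :=
  LinearMap.pi fun s =>
    Sum.elim (fun _ => (0 : (Fin n → PolyC m₁ m₂ n) →ₗ[ℂ] PolyC m₁ m₂ n))
      (fun j => LinearMap.proj j) s

/-!
The differential `δ` depends only on the odd coordinates of a cochain and takes values in
`E = 𝒞 v_1 + ⋯ + 𝒞 v_m`. So `im δ ≤ E ≤ ker δ`, while the odd cochains `O` complement `E` and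
`K₃ = O ⊓ ker δ`. Everything else is linear algebra: the modular law gives `ker δ = E ⊔ K₃`, the
image is already reached from `O`, and the quotient of `E ⊕ K₃` by a subspace of `E` splits.
-/

section LinearAlgebra

section Semiring

variable {R M N : Type*} [Semiring R] [AddCommMonoid M] [Module R M] [AddCommMonoid N] [Module R N]

lemma range_eq_map_of_codisjoint_of_le_ker {f : M →ₗ[R] N} {p q : Submodule R M}
    (hpq : Codisjoint p q) (hp : p ≤ LinearMap.ker f) : LinearMap.range f = q.map f := by
  rw [LinearMap.range_eq_map, ← hpq.eq_top, Submodule.map_sup, LinearMap.le_ker_iff_map.1 hp,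
    bot_sup_eq]

end Semiring

section Ring

variable {R M N : Type*} [Ring R] [AddCommGroup M] [Module R M]

lemma ker_eq_sup_inf_ker_of_codisjoint [AddCommMonoid N] [Module R N] {f : M →ₗ[R] N}
    {p q : Submodule R M} (hpq : Codisjoint p q) (hp : p ≤ LinearMap.ker f) :
    LinearMap.ker f = p ⊔ q ⊓ LinearMap.ker f := by
  rw [← sup_inf_assoc_of_le q hp, hpq.eq_top, top_inf_eq]

variable [AddCommGroup N] [Module R N]

lemma isCompl_ker_range_of_comp_eq_id {f : M →ₗ[R] N} {g : N →ₗ[R] M}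
    (hfg : f ∘ₗ g = LinearMap.id) : IsCompl (LinearMap.ker f) (LinearMap.range g) := by
  have hgf (y : N) : f (g y) = y := LinearMap.congr_fun hfg y
  refine ⟨Submodule.disjoint_def.2 ?_, Submodule.codisjoint_iff_exists_add_eq.2 fun x =>
    ⟨x - g (f x), g (f x), ?_, ⟨f x, rfl⟩, sub_add_cancel _ _⟩⟩
  · rintro _ hx ⟨y, rfl⟩
    rw [LinearMap.mem_ker, hgf] at hx
    rw [hx, map_zero]
  · rw [LinearMap.mem_ker, map_sub, hgf, sub_self]

/-- The quotient of a product of modules by a product of submodules is the product of the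
quotients. -/
def quotientProdEquiv (p : Submodule R M) (q : Submodule R N) :
    ((M × N) ⧸ p.prod q) ≃ₗ[R] (M ⧸ p) × (N ⧸ q) :=
  (Submodule.quotEquivOfEq _ _ (by rw [LinearMap.ker_prodMap, p.ker_mkQ, q.ker_mkQ])).trans
    ((p.mkQ.prodMap q.mkQ).quotKerEquivOfSurjective
      (p.mkQ_surjective.prodMap q.mkQ_surjective))

/-- The addition map `p × q → p + q` as an isomorphism, for submodules with `p ∩ q = 0`. -/
def prodEquivSupOfDisjoint {p q : Submodule R M} (hpq : Disjoint p q) :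
    (p × q) ≃ₗ[R] ↥(p ⊔ q) :=
  (LinearEquiv.ofInjective (p.subtype.coprod q.subtype) <| LinearMap.ker_eq_bot.1 <| by
    rw [LinearMap.ker_coprod_of_disjoint_range _ _ (by simpa only [Submodule.range_subtype]),
      p.ker_subtype, q.ker_subtype, Submodule.prod_bot]).trans
    (LinearEquiv.ofEq _ _ (p.sup_eq_range q).symm)

lemma coe_prodEquivSupOfDisjoint {p q : Submodule R M} (hpq : Disjoint p q) (x : p × q) :
    (prodEquivSupOfDisjoint hpq x : M) = x.1 + x.2 := rfl

lemma map_prodEquivSupOfDisjoint_prod_bot {p q r : Submodule R M} (hpq : Disjoint p q)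
    (hr : r ≤ p) :
    ((r.comap p.subtype).prod ⊥).map (prodEquivSupOfDisjoint hpq : (p × q) →ₗ[R] ↥(p ⊔ q)) =
      r.comap (p ⊔ q).subtype := by
  ext z
  constructor
  · rintro ⟨⟨x, y⟩, ⟨hx, hy⟩, rfl⟩
    obtain rfl : y = 0 := hy
    simpa [coe_prodEquivSupOfDisjoint] using hx
  · intro hz
    refine ⟨(⟨z, hr hz⟩, 0), ⟨hz, rfl⟩, Subtype.ext ?_⟩
    simp [coe_prodEquivSupOfDisjoint]

/-- The isomorphism `(p ⊕ q) / r ≃ p / r ⊕ q` for an internal direct sum `p ⊕ q` and `r ≤ p`. -/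
def quotientSupEquivOfDisjoint {p q r : Submodule R M} (hpq : Disjoint p q) (hr : r ≤ p) :
    (↥(p ⊔ q) ⧸ r.comap (p ⊔ q).subtype) ≃ₗ[R] (p ⧸ r.comap p.subtype) × q :=
  (Submodule.Quotient.equiv _ _ _ (map_prodEquivSupOfDisjoint_prod_bot hpq hr)).symm ≪≫ₗ
    quotientProdEquiv _ _ ≪≫ₗ
    LinearEquiv.prodCongr (LinearEquiv.refl R _) (Submodule.quotEquivOfEqBot ⊥ rfl)

end Ring

end LinearAlgebra

section MixedCohomology

variable {m₁ m₂ n}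

lemma deltaC_apply_inl_inl (f : CochainC m₁ m₂ n) (i : Fin m₁) :
    deltaC m₁ m₂ n f (Sum.inl (Sum.inl i)) = ∑ j, X (Sum.inl i, j) * f (Sum.inr j) := by
  simp [deltaC]

lemma deltaC_apply_inl_inr (f : CochainC m₁ m₂ n) (k : Fin m₂) :
    deltaC m₁ m₂ n f (Sum.inl (Sum.inr k)) = -∑ j, pderiv (Sum.inr k, j) (f (Sum.inr j)) := by
  simp [deltaC]

lemma deltaC_apply_inr (f : CochainC m₁ m₂ n) (j : Fin n) :
    deltaC m₁ m₂ n f (Sum.inr j) = 0 := by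
  simp [deltaC]

lemma mem_ker_deltaC {f : CochainC m₁ m₂ n} :
    f ∈ LinearMap.ker (deltaC m₁ m₂ n) ↔
      (∀ i : Fin m₁, ∑ j, X (Sum.inl i, j) * f (Sum.inr j) = 0) ∧
        ∀ k : Fin m₂, ∑ j, pderiv (Sum.inr k, j) (f (Sum.inr j)) = 0 := by
  simp [LinearMap.mem_ker, funext_iff, Sum.forall, deltaC_apply_inl_inl, deltaC_apply_inl_inr,
    deltaC_apply_inr]

lemma mem_range_oddInclC {f : CochainC m₁ m₂ n} :
    f ∈ LinearMap.range (oddInclC m₁ m₂ n) ↔ ∀ i, f (Sum.inl i) = 0 := by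
  constructor
  · rintro ⟨g, rfl⟩ i
    rfl
  · intro hf
    refine ⟨fun j => f (Sum.inr j), funext ?_⟩
    rintro (i | j)
    exacts [(hf i).symm, rfl]

variable (m₁ m₂ n)

lemma evenPartC_eq_ker_funLeft :
    evenPartC m₁ m₂ n = LinearMap.ker (LinearMap.funLeft ℂ (PolyC m₁ m₂ n) Sum.inr) := by
  ext f
  exact funext_iff.symm

lemma isCompl_evenPartC_range_oddInclC :
    IsCompl (evenPartC m₁ m₂ n) (LinearMap.range (oddInclC m₁ m₂ n)) := by
  rw [evenPartC_eq_ker_funLeft]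
  exact isCompl_ker_range_of_comp_eq_id rfl

lemma KthreeC_eq_range_oddInclC_inf_ker_deltaC :
    KthreeC m₁ m₂ n = LinearMap.range (oddInclC m₁ m₂ n) ⊓ LinearMap.ker (deltaC m₁ m₂ n) := by
  ext f
  rw [Submodule.mem_inf, mem_range_oddInclC, mem_ker_deltaC]
  rfl

lemma evenPartC_le_ker_deltaC : evenPartC m₁ m₂ n ≤ LinearMap.ker (deltaC m₁ m₂ n) := by
  intro f (hf : ∀ j, f (Sum.inr j) = 0)
  rw [mem_ker_deltaC]
  simp [hf]

lemma range_deltaC_le_evenPartC : LinearMap.range (deltaC m₁ m₂ n) ≤ evenPartC m₁ m₂ n := by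
  rintro _ ⟨f, rfl⟩
  exact deltaC_apply_inr f

lemma disjoint_evenPartC_KthreeC : Disjoint (evenPartC m₁ m₂ n) (KthreeC m₁ m₂ n) := by
  rw [KthreeC_eq_range_oddInclC_inf_ker_deltaC]
  exact (isCompl_evenPartC_range_oddInclC m₁ m₂ n).disjoint.mono_right inf_le_left

lemma ker_deltaC : LinearMap.ker (deltaC m₁ m₂ n) = evenPartC m₁ m₂ n ⊔ KthreeC m₁ m₂ n := by
  rw [KthreeC_eq_range_oddInclC_inf_ker_deltaC]
  exact ker_eq_sup_inf_ker_of_codisjoint (isCompl_evenPartC_range_oddInclC m₁ m₂ n).codisjoint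
    (evenPartC_le_ker_deltaC m₁ m₂ n)

lemma range_deltaC_eq_range_comp_oddInclC :
    LinearMap.range (deltaC m₁ m₂ n) =
      LinearMap.range ((deltaC m₁ m₂ n).comp (oddInclC m₁ m₂ n)) := by
  rw [LinearMap.range_comp]
  exact range_eq_map_of_codisjoint_of_le_ker (isCompl_evenPartC_range_oddInclC m₁ m₂ n).codisjoint
    (evenPartC_le_ker_deltaC m₁ m₂ n)

end MixedCohomology

/-- Mixed `u`-cohomology of `gl(m|n)` on the natural module for the mixing set
`D = ⊕_{m₁ < i ≤ m, j} ℂ x_{ij}`, `1 ≤ m₁ < m` (Section 4.1.3 of the paper):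
`ker δ = (𝒞 v_1 + ⋯ + 𝒞 v_m) + K₃`,
`im δ = {Σ_{i ≤ m₁}(Σ_j x_{ij} f_j) v_i - Σ_{m₁<k≤m}(Σ_j ∂_{x̄_{kj}} f_j) v_k : f_j ∈ 𝒞}`,
and `H^*_D(u,V) ≅ (𝒞 v_1 + ⋯ + 𝒞 v_m)/im δ ⊕ K₃`. -/
theorem mixed_u_cohomology_glmn_mixedFock (hm₁ : 0 < m₁) (hm₂ : 0 < m₂) :
    LinearMap.ker (deltaC m₁ m₂ n) = evenPartC m₁ m₂ n ⊔ KthreeC m₁ m₂ n ∧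
    LinearMap.range (deltaC m₁ m₂ n) =
      LinearMap.range ((deltaC m₁ m₂ n).comp (oddInclC m₁ m₂ n)) ∧
    LinearMap.range (deltaC m₁ m₂ n) ≤ evenPartC m₁ m₂ n ∧
    Nonempty
      ((↥(LinearMap.ker (deltaC m₁ m₂ n)) ⧸
          (LinearMap.range (deltaC m₁ m₂ n)).comap (LinearMap.ker (deltaC m₁ m₂ n)).subtype)
        ≃ₗ[ℂ]
       (↥(evenPartC m₁ m₂ n) ⧸
          (LinearMap.range (deltaC m₁ m₂ n)).comap (evenPartC m₁ m₂ n).subtype)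
         × ↥(KthreeC m₁ m₂ n)) := by
  refine ⟨ker_deltaC m₁ m₂ n, range_deltaC_eq_range_comp_oddInclC m₁ m₂ n,
    range_deltaC_le_evenPartC m₁ m₂ n, ?_⟩
  rw [ker_deltaC]
  exact ⟨quotientSupEquivOfDisjoint (disjoint_evenPartC_KthreeC m₁ m₂ n)
    (range_deltaC_le_evenPartC m₁ m₂ n)⟩
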